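/- Let X = {(0,0)} ∪ {(x, y) ∈ ℝ² : 0 < |x| ≤ 1 and |y| = exp(−1/x²)} and Y = {(0,0)} ∪ {(x, y) ∈ ℝ² : 0 < |x| ≤ √2 and |y| = exp(−2/x²)}. Then X and Y are bi-Lipschitz homeomorphic: there exists a bijection h : X → Y and a constant K ≥ 0 such that both h and h⁻¹ are K-Lipschitz with respect to the Euclidean distance of ℝ². -/

import Mathlib

/-- The curve `|y| = exp (-1/x²)`, `0 < |x| ≤ 1`, together with the origin. -/
def flatCurveX : Set (EuclideanSpace ℝ (Fin 2)) :=
  {p | (p 0 = 0 ∧ p 1 = 0) ∨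
    (0 < |p 0| ∧ |p 0| ≤ 1 ∧ |p 1| = Real.exp (-1 / (p 0) ^ 2))}

/-- The curve `|y| = exp (-2/x²)`, `0 < |x| ≤ √2`, together with the origin. -/
def flatCurveY : Set (EuclideanSpace ℝ (Fin 2)) :=
  {p | (p 0 = 0 ∧ p 1 = 0) ∨
    (0 < |p 0| ∧ |p 0| ≤ Real.sqrt 2 ∧ |p 1| = Real.exp (-2 / (p 0) ^ 2))}

/-!
Since `-(c² a) / (c x)² = -a / x²`, the linear map `(x, y) ↦ (c x, y)` carries the curve
`|y| = exp (-a / x²)` onto `|y| = exp (-(c² a) / x²)`, and a linear automorphism of the plane is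
bi-Lipschitz. The two curves of the theorem correspond to `a = 1` and `c = √2`.
-/

open scoped NNReal

/-- Bi-Lipschitz equivalence of metric spaces. A single constant serves for both directions, which
is no restriction since the larger of two constants can be taken. -/
def BiLipschitzEquivalent (α β : Type*) [PseudoEMetricSpace α] [PseudoEMetricSpace β] : Prop :=
  ∃ (h : α ≃ β) (K : ℝ≥0), LipschitzWith K h ∧ LipschitzWith K h.symm

namespace BiLipschitzEquivalent

theorem exists_dist_le_mul {α β : Type*} [PseudoMetricSpace α] [PseudoMetricSpace β]
    (hαβ : BiLipschitzEquivalent α β) :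
    ∃ (h : α ≃ β) (K : ℝ), 0 ≤ K ∧ (∀ a b, dist (h a) (h b) ≤ K * dist a b) ∧
      ∀ a b, dist (h.symm a) (h.symm b) ≤ K * dist a b :=
  let ⟨h, K, h_lipschitz, h_symm_lipschitz⟩ := hαβ
  ⟨h, K, K.coe_nonneg, h_lipschitz.dist_le_mul, h_symm_lipschitz.dist_le_mul⟩

theorem of_continuousLinearEquiv {𝕜 E F : Type*} [NontriviallyNormedField 𝕜]
    [SeminormedAddCommGroup E] [NormedSpace 𝕜 E] [SeminormedAddCommGroup F] [NormedSpace 𝕜 F]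
    (L : E ≃L[𝕜] F) {s : Set E} {t : Set F} (mem_iff : ∀ x, L x ∈ t ↔ x ∈ s) :
    BiLipschitzEquivalent s t :=
  ⟨L.toEquiv.subtypeEquiv fun x => (mem_iff x).symm,
    max ‖(L : E →L[𝕜] F)‖₊ ‖(L.symm : F →L[𝕜] E)‖₊,
    fun x y => L.lipschitz.weaken (le_max_left _ _) x y,
    fun x y => L.symm.lipschitz.weaken (le_max_right _ _) x y⟩

end BiLipschitzEquivalent

/-- The diagonal linear automorphism `x ↦ (wᵢ xᵢ)ᵢ` of Euclidean space. Its entries are units so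
that it is invertible by construction. -/
noncomputable def diagonalScaling {𝕜 ι : Type*} [NormedField 𝕜] (w : ι → 𝕜ˣ) :
    EuclideanSpace 𝕜 ι ≃L[𝕜] EuclideanSpace 𝕜 ι :=
  (PiLp.continuousLinearEquiv 2 𝕜 _).trans
    ((ContinuousLinearEquiv.piCongrRight fun i => ContinuousLinearEquiv.unitsEquivAut 𝕜 (w i)).trans
      (PiLp.continuousLinearEquiv 2 𝕜 _).symm)

theorem diagonalScaling_apply {𝕜 ι : Type*} [NormedField 𝕜] (w : ι → 𝕜ˣ)
    (x : EuclideanSpace 𝕜 ι) (i : ι) : diagonalScaling w x i = w i * x i :=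
  mul_comm _ _

/-- The curve `|y| = exp (-a/x²)`, `0 < |x| ≤ r`, together with the origin: the common form of
`flatCurveX` (`a = r = 1`) and `flatCurveY` (`a = 2`, `r = √2`). -/
def flatCurve (a r : ℝ) : Set (EuclideanSpace ℝ (Fin 2)) :=
  {p | (p 0 = 0 ∧ p 1 = 0) ∨ (0 < |p 0| ∧ |p 0| ≤ r ∧ |p 1| = Real.exp (-a / (p 0) ^ 2))}

theorem diagonalScaling_mem_flatCurve_iff (a r : ℝ) (c : ℝˣ) (p : EuclideanSpace ℝ (Fin 2)) :
    diagonalScaling ![c, 1] p ∈ flatCurve ((c : ℝ) ^ 2 * a) (|(c : ℝ)| * r) ↔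
      p ∈ flatCurve a r := by
  have hc : 0 < |(c : ℝ)| := abs_pos.mpr c.ne_zero
  have exponent_eq : -((c : ℝ) ^ 2 * a) / (c * p 0) ^ 2 = -a / (p 0) ^ 2 := by
    rw [mul_pow, ← mul_neg, mul_div_mul_left _ _ (pow_ne_zero 2 c.ne_zero)]
  simp only [flatCurve, Set.mem_ofPred_eq, diagonalScaling_apply, Matrix.cons_val_zero,
    Matrix.cons_val_one, Units.val_one, one_mul, exponent_eq, abs_mul, mul_pos_iff_of_pos_left hc,
    mul_le_mul_iff_right₀ hc, mul_eq_zero, c.ne_zero, false_or]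

theorem stmt_4_general {a b r s c : ℝ} (hc : c ≠ 0) (hb : b = c ^ 2 * a) (hs : s = |c| * r) :
    BiLipschitzEquivalent (flatCurve a r) (flatCurve b s) := by
  subst hb hs
  exact BiLipschitzEquivalent.of_continuousLinearEquiv (diagonalScaling ![Units.mk0 c hc, 1])
    (diagonalScaling_mem_flatCurve_iff a r (Units.mk0 c hc))

/-- The germs `|y| = exp (-1/x²)` and `|y| = exp (-2/x²)` are
bi-Lipschitz homeomorphic. -/
theorem stmt_4 :
    ∃ (h : flatCurveX ≃ flatCurveY) (K : ℝ), 0 ≤ K ∧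
      (∀ a b : flatCurveX,
        dist (h a : EuclideanSpace ℝ (Fin 2)) (h b : EuclideanSpace ℝ (Fin 2)) ≤
          K * dist (a : EuclideanSpace ℝ (Fin 2)) (b : EuclideanSpace ℝ (Fin 2))) ∧
      (∀ a b : flatCurveY,
        dist (h.symm a : EuclideanSpace ℝ (Fin 2)) (h.symm b : EuclideanSpace ℝ (Fin 2)) ≤
          K * dist (a : EuclideanSpace ℝ (Fin 2)) (b : EuclideanSpace ℝ (Fin 2))) := by
  have equivalent : BiLipschitzEquivalent flatCurveX flatCurveY :=
    stmt_4_general (a := 1) (b := 2) (r := 1) (s := √2) (c := √2)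
      (by positivity) (by simp) (by rw [abs_of_nonneg (Real.sqrt_nonneg 2), mul_one])
  exact equivalent.exists_dist_le_mul
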